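/- arXiv:1505.04085 — 4 statements merged into one kernel-verified Lean document; each statement's English description precedes it below -/
import Mathlib

section
/- Let X be an order-3 tensor of dimensions n_1 \times n_2 \times n_3 admitting the rank decomposition X_{ijk} = \sum_{l=1}^r (u_l)_i (v_l)_j (w_l)_k, where the family v_1, \ldots, v_r \in \mathbb{R}^{n_2} is linearly independent. Let a, b \in \mathbb{R}^{n_3} and suppose \langle w_l, b \rangle \neq 0 for every l = 1, \ldots, r. Then every matrix M \in \mathbb{R}^{n_1 \times n_1} satisfying M \cdot X^3_b = X^3_a (matrix product) satisfies M u_l = (\langle w_l, a \rangle / \langle w_l, b \rangle)\, u_l for every l = 1, \ldots, r; i.e., each u_l is an eigenvector of M with eigenvalue \langle w_l, a \rangle / \langle w_l, b \rangle. -/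
/-- If `M · X³_b = X³ₐ` and the `vₗ` are linearly independent and `⟨wₗ, b⟩ ≠ 0`,
then each `uₗ` is an eigenvector of `M` with eigenvalue `⟨wₗ, a⟩ / ⟨wₗ, b⟩`. -/
theorem leurgans_left_eigenvectors {n₁ n₂ n₃ r : ℕ}
    (X : Fin n₁ → Fin n₂ → Fin n₃ → ℝ)
    (u : Fin r → Fin n₁ → ℝ) (v : Fin r → Fin n₂ → ℝ) (w : Fin r → Fin n₃ → ℝ)
    (hX : ∀ i j k, X i j k = ∑ l, u l i * v l j * w l k)
    (hv : LinearIndependent ℝ v)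
    (a b : Fin n₃ → ℝ) (hb : ∀ l, (∑ k, w l k * b k) ≠ 0)
    (M : Matrix (Fin n₁) (Fin n₁) ℝ)
    (hM : M * (Matrix.of fun i j => ∑ k, X i j k * b k)
            = (Matrix.of fun i j => ∑ k, X i j k * a k)) :
    ∀ l, M.mulVec (u l) = ((∑ k, w l k * a k) / (∑ k, w l k * b k)) • u l := by
  have key : ∀ (c : Fin n₃ → ℝ) i j,
      ∑ k, X i j k * c k = ∑ l, u l i * (∑ k, w l k * c k) * v l j := by
    intro c i j
    simp only [hX, Finset.sum_mul, Finset.mul_sum]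
    rw [Finset.sum_comm]
    refine Finset.sum_congr rfl fun l _ => Finset.sum_congr rfl fun k _ => ?_
    ring
  intro l
  ext i
  have h0 : ∑ l, ((∑ k, w l k * b k) * M.mulVec (u l) i - (∑ k, w l k * a k) * u l i) • v l
      = 0 := by
    ext j
    have h := congrFun (congrFun hM i) j
    simp only [Matrix.mul_apply, Matrix.of_apply, key] at h
    have h1 : ∑ p, M i p * ∑ l, u l p * (∑ k, w l k * b k) * v l j
        = ∑ l, (∑ k, w l k * b k) * M.mulVec (u l) i * v l j := by
      simp only [Matrix.mulVec, dotProduct]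
      simp only [Finset.mul_sum (s := (Finset.univ : Finset (Fin r)))]
      rw [Finset.sum_comm]
      refine Finset.sum_congr rfl fun l _ => ?_
      rw [Finset.mul_sum, Finset.sum_mul]
      refine Finset.sum_congr rfl fun p _ => ?_
      ring
    rw [h1] at h
    simp only [Finset.sum_apply, Pi.smul_apply, smul_eq_mul, sub_mul, Finset.sum_sub_distrib,
      Pi.zero_apply]
    rw [h, sub_eq_zero]
    refine Finset.sum_congr rfl fun l _ => ?_
    ring
  have h2 := Fintype.linearIndependent_iff.mp hv _ h0 l
  have h3 := hb l
  simp only [Pi.smul_apply, smul_eq_mul]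
  rw [div_mul_eq_mul_div, eq_div_iff h3]
  linarith
end

section
/- Let X be an order-3 tensor of dimensions n_1 \times n_2 \times n_3 admitting the rank decomposition X_{ijk} = \sum_{l=1}^r (u_l)_i (v_l)_j (w_l)_k, where the family u_1, \ldots, u_r \in \mathbb{R}^{n_1} is linearly independent. Let a, b \in \mathbb{R}^{n_3} and suppose \langle w_l, b \rangle \neq 0 for every l = 1, \ldots, r. Then every matrix N \in \mathbb{R}^{n_2 \times n_2} satisfying X^3_b \cdot N = X^3_a (matrix product) satisfies N^T v_l = (\langle w_l, a \rangle / \langle w_l, b \rangle)\, v_l for every l = 1, \ldots, r; i.e., each v_l is an eigenvector of N^T with eigenvalue \langle w_l, a \rangle / \langle w_l, b \rangle. -/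
/-- If `X³_b · N = X³ₐ` and the `uₗ` are linearly independent and `⟨wₗ, b⟩ ≠ 0`,
then each `vₗ` is an eigenvector of `Nᵀ` with eigenvalue `⟨wₗ, a⟩ / ⟨wₗ, b⟩`. -/
theorem leurgans_right_eigenvectors {n₁ n₂ n₃ r : ℕ}
    (X : Fin n₁ → Fin n₂ → Fin n₃ → ℝ)
    (u : Fin r → Fin n₁ → ℝ) (v : Fin r → Fin n₂ → ℝ) (w : Fin r → Fin n₃ → ℝ)
    (hX : ∀ i j k, X i j k = ∑ l, u l i * v l j * w l k)
    (hu : LinearIndependent ℝ u)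
    (a b : Fin n₃ → ℝ) (hb : ∀ l, (∑ k, w l k * b k) ≠ 0)
    (N : Matrix (Fin n₂) (Fin n₂) ℝ)
    (hN : (Matrix.of fun i j => ∑ k, X i j k * b k) * N
            = (Matrix.of fun i j => ∑ k, X i j k * a k)) :
    ∀ l, (Matrix.transpose N).mulVec (v l) = ((∑ k, w l k * a k) / (∑ k, w l k * b k)) • v l := by
  have key : ∀ (c : Fin n₃ → ℝ) i j,
      ∑ k, X i j k * c k = ∑ l, u l i * (v l j * ∑ k, w l k * c k) := by
    intro c i j
    simp only [hX, Finset.sum_mul, Finset.mul_sum]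
    rw [Finset.sum_comm]
    refine Finset.sum_congr rfl fun l _ => Finset.sum_congr rfl fun k _ => ?_
    ring
  have main : ∀ j l, (∑ k, w l k * b k) * (∑ m, v l m * N m j)
      - (∑ k, w l k * a k) * v l j = 0 := by
    intro j
    refine Fintype.linearIndependent_iff.mp hu _ ?_
    funext i
    have h := congrFun (congrFun hN i) j
    rw [Matrix.mul_apply] at h
    simp only [Matrix.of_apply, key] at h
    have h2 : ∑ m, (∑ l, u l i * (v l m * ∑ k, w l k * b k)) * N m j
        = ∑ l, (∑ k, w l k * b k) * (∑ m, v l m * N m j) * u l i := by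
      simp only [Finset.sum_mul _ _ (N _ j)]
      rw [Finset.sum_comm]
      refine Finset.sum_congr rfl fun l _ => ?_
      generalize (∑ k, w l k * b k) = B
      rw [Finset.mul_sum, Finset.sum_mul]
      refine Finset.sum_congr rfl fun m _ => ?_
      ring
    rw [h2] at h
    simp only [Finset.sum_apply, Pi.smul_apply, smul_eq_mul, sub_mul, Finset.sum_sub_distrib,
      Pi.zero_apply]
    rw [h, sub_eq_zero]
    refine Finset.sum_congr rfl fun l _ => ?_
    ring
  intro l
  funext j
  have h := main j l
  have e : (Matrix.transpose N).mulVec (v l) j = ∑ m, v l m * N m j := by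
    simp only [Matrix.mulVec, dotProduct, Matrix.transpose_apply]
    exact Finset.sum_congr rfl fun m _ => mul_comm _ _
  rw [e, Pi.smul_apply, smul_eq_mul, div_mul_eq_mul_div, eq_div_iff (hb l)]
  linarith
end

section
/- Let X be an order-3 tensor of dimensions n_1 \times n_2 \times n_3 admitting the rank decomposition X_{ijk} = \sum_{l=1}^r (u_l)_i (v_l)_j (w_l)_k, where the family u_1, \ldots, u_r \in \mathbb{R}^{n_1} is linearly independent and the family v_1, \ldots, v_r \in \mathbb{R}^{n_2} is linearly independent. Let a, b \in \mathbb{R}^{n_3} and suppose \langle w_l, b \rangle \neq 0 for every l = 1, \ldots, r. Then there exists a matrix M \in \mathbb{R}^{n_1 \times n_1} with M \cdot X^3_b = X^3_a, and there exists a matrix N \in \mathbb{R}^{n_2 \times n_2} with X^3_b \cdot N = X^3_a. -/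
theorem exists_left_inv_aux {n r : ℕ} (u : Fin r → Fin n → ℝ)
    (hu : LinearIndependent ℝ u) :
    ∃ P : Matrix (Fin r) (Fin n) ℝ, P * (Matrix.of u).transpose = 1 := by
  have hinj : Function.Injective (Matrix.of u).transpose.mulVec := by
    rw [Matrix.mulVec_injective_iff]
    exact hu
  obtain ⟨g, hg⟩ := LinearMap.exists_leftInverse_of_injective
    (Matrix.toLin' (Matrix.of u).transpose) (LinearMap.ker_eq_bot.mpr hinj)
  refine ⟨LinearMap.toMatrix' g, ?_⟩
  have := congrArg LinearMap.toMatrix' hg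
  rwa [LinearMap.toMatrix'_comp, LinearMap.toMatrix'_toLin', LinearMap.toMatrix'_id] at this

theorem contraction_aux {n₁ n₂ n₃ r : ℕ}
    (X : Fin n₁ → Fin n₂ → Fin n₃ → ℝ)
    (u : Fin r → Fin n₁ → ℝ) (v : Fin r → Fin n₂ → ℝ) (w : Fin r → Fin n₃ → ℝ)
    (hX : ∀ i j k, X i j k = ∑ l, u l i * v l j * w l k) (a : Fin n₃ → ℝ) :
    (Matrix.of fun i j => ∑ k, X i j k * a k) =
      (Matrix.of u).transpose * Matrix.diagonal (fun l => ∑ k, w l k * a k) * Matrix.of v := by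
  ext i j
  rw [Matrix.mul_apply]
  simp only [Matrix.mul_diagonal, Matrix.of_apply, Matrix.transpose_apply, hX, Finset.sum_mul,
    Finset.mul_sum]
  rw [Finset.sum_comm]
  refine Finset.sum_congr rfl fun l _ => Finset.sum_congr rfl fun k _ => ?_
  ring

/-- Existence of matrices `M`, `N` with `M · X³_b = X³ₐ` and `X³_b · N = X³ₐ`,
under linear independence of the factors and non-degeneracy `⟨wₗ, b⟩ ≠ 0`. -/
theorem leurgans_exists_transfer_matrices {n₁ n₂ n₃ r : ℕ}
    (X : Fin n₁ → Fin n₂ → Fin n₃ → ℝ)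
    (u : Fin r → Fin n₁ → ℝ) (v : Fin r → Fin n₂ → ℝ) (w : Fin r → Fin n₃ → ℝ)
    (hX : ∀ i j k, X i j k = ∑ l, u l i * v l j * w l k)
    (hu : LinearIndependent ℝ u) (hv : LinearIndependent ℝ v)
    (a b : Fin n₃ → ℝ) (hb : ∀ l, (∑ k, w l k * b k) ≠ 0) :
    (∃ M : Matrix (Fin n₁) (Fin n₁) ℝ,
      M * (Matrix.of fun i j => ∑ k, X i j k * b k)
        = (Matrix.of fun i j => ∑ k, X i j k * a k)) ∧
    (∃ N : Matrix (Fin n₂) (Fin n₂) ℝ,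
      (Matrix.of fun i j => ∑ k, X i j k * b k) * N
        = (Matrix.of fun i j => ∑ k, X i j k * a k)) := by
  obtain ⟨P, hP⟩ := exists_left_inv_aux u hu
  obtain ⟨Q, hQ⟩ := exists_left_inv_aux v hv
  have hQ' : Matrix.of v * Q.transpose = 1 := by
    have := congrArg Matrix.transpose hQ
    simpa [Matrix.transpose_mul] using this
  rw [contraction_aux X u v w hX a, contraction_aux X u v w hX b]
  set α : Fin r → ℝ := fun l => ∑ k, w l k * a k
  set β : Fin r → ℝ := fun l => ∑ k, w l k * b k
  have h1 : Matrix.diagonal (fun l => α l / β l) * Matrix.diagonal β = Matrix.diagonal α := by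
    rw [Matrix.diagonal_mul_diagonal]
    congr 1
    funext l
    exact div_mul_cancel₀ _ (hb l)
  have h2 : Matrix.diagonal β * Matrix.diagonal (fun l => α l / β l) = Matrix.diagonal α := by
    rw [Matrix.diagonal_mul_diagonal]
    congr 1
    funext l
    exact mul_div_cancel₀ _ (hb l)
  constructor
  · refine ⟨(Matrix.of u).transpose * Matrix.diagonal (fun l => α l / β l) * P, ?_⟩
    calc _ = (Matrix.of u).transpose * (Matrix.diagonal (fun l => α l / β l) *
          (P * (Matrix.of u).transpose) * Matrix.diagonal β) * Matrix.of v := by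
          simp only [Matrix.mul_assoc]
      _ = _ := by rw [hP, Matrix.mul_one, h1]
  · refine ⟨Q.transpose * Matrix.diagonal (fun l => α l / β l) * Matrix.of v, ?_⟩
    calc _ = (Matrix.of u).transpose * (Matrix.diagonal β * (Matrix.of v * Q.transpose) *
          Matrix.diagonal (fun l => α l / β l)) * Matrix.of v := by
          simp only [Matrix.mul_assoc]
      _ = _ := by rw [hQ', Matrix.mul_one, h2]
end

section
/- Let u_1, \ldots, u_r \in \mathbb{R}^{n} and let v_1, \ldots, v_r \in \mathbb{R}^{n'} be linearly independent. Let \nu_1, \ldots, \nu_r \in \mathbb{R} and \mu_1, \ldots, \mu_r \in \mathbb{R} with \mu_l \neq 0 for every l, and set X_A = \sum_{l=1}^r \nu_l\, u_l v_l^T and X_B = \sum_{l=1}^r \mu_l\, u_l v_l^T (n \times n' matrices). Then every matrix M \in \mathbb{R}^{n \times n} satisfying M \cdot X_B = X_A satisfies M u_l = (\nu_l / \mu_l)\, u_l for every l = 1, \ldots, r; i.e., each u_l is an eigenvector of M with eigenvalue \nu_l / \mu_l. -/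
/-- Eigendecomposition step of higher-order Leurgans: if `M · X_B = X_A` with
`X_A = ∑ₗ νₗ uₗ vₗᵀ`, `X_B = ∑ₗ μₗ uₗ vₗᵀ`, the `vₗ` linearly independent and
`μₗ ≠ 0`, then `M uₗ = (νₗ / μₗ) uₗ` for every `l`. -/
theorem higher_order_leurgans_eigenvectors {n n' r : ℕ}
    (u : Fin r → Fin n → ℝ) (v : Fin r → Fin n' → ℝ)
    (hv : LinearIndependent ℝ v)
    (ν μ : Fin r → ℝ) (hμ : ∀ l, μ l ≠ 0)
    (M : Matrix (Fin n) (Fin n) ℝ)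
    (hM : M * (∑ l, μ l • Matrix.vecMulVec (u l) (v l))
            = ∑ l, ν l • Matrix.vecMulVec (u l) (v l)) :
    ∀ l, M.mulVec (u l) = (ν l / μ l) • u l := by
  intro l
  ext i
  rw [Fintype.linearIndependent_iff] at hv
  have key := hv (fun l => μ l * M.mulVec (u l) i - ν l * u l i) (by
    ext j
    have h := congrFun (congrFun hM i) j
    rw [Matrix.mul_sum] at h
    simp only [Matrix.mul_smul, Matrix.mul_vecMulVec, Matrix.sum_apply, Matrix.smul_apply,
      Matrix.vecMulVec_apply, smul_eq_mul] at h
    simp only [Finset.sum_apply, Pi.smul_apply, smul_eq_mul, Pi.zero_apply, sub_mul,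
      Finset.sum_sub_distrib, mul_assoc]
    rw [h, sub_self]) l
  have hl := hμ l
  simp only [Pi.smul_apply, smul_eq_mul]
  field_simp
  linarith
end
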